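/- Let n be a positive integer divisible by 3. Then, as polynomials modulo Φ_n(q)^2 (the square of the n-th cyclotomic polynomial), Σ_{k=0}^{n-1} q^k·C_k(q) ≡ q^{n(2n+1)/3} + (1/3)(q^n - 1)(2 + (n+1)q^{2n/3}), where C_k(q) = [2k choose k]_q - q·[2k choose k+1]_q is MacMahon's q-Catalan polynomial. -/

import Mathlib

open Polynomial Finset

/-- The Gaussian binomial coefficient as a polynomial in `q`, defined via the
    `q`-Pascal recurrence `[n+1, k+1] = [n, k] + q^(k+1) * [n, k+1]`. -/
noncomputable def qBinom : ℕ → ℕ → Polynomial ℚ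
  | _, 0 => 1
  | 0, _ + 1 => 0
  | n + 1, k + 1 => qBinom n k + X ^ (k + 1) * qBinom n (k + 1)

/-- MacMahon's `q`-Catalan polynomial `C_k(q) = [2k, k]_q - q * [2k, k+1]_q`. -/
noncomputable def qCatalan (k : ℕ) : Polynomial ℚ := qBinom (2 * k) k - X * qBinom (2 * k) (k + 1)


namespace QCat

/-! ### Basic facts on Gaussian binomials -/

lemma qb_zero (n : ℕ) : qBinom n 0 = 1 := by cases n <;> simp [qBinom]

lemma qb_zero_succ (k : ℕ) : qBinom 0 (k + 1) = 0 := by simp [qBinom]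

lemma qb_succ (n k : ℕ) :
    qBinom (n + 1) (k + 1) = qBinom n k + X ^ (k + 1) * qBinom n (k + 1) := by
  simp [qBinom]

lemma qb_gt (n : ℕ) : ∀ k, n < k → qBinom n k = 0 := by
  induction n with
  | zero => intro k hk; obtain ⟨k, rfl⟩ : ∃ j, k = j + 1 := ⟨k - 1, by omega⟩; exact qb_zero_succ k
  | succ n ih =>
    intro k hk
    obtain ⟨k, rfl⟩ : ∃ j, k = j + 1 := ⟨k - 1, by omega⟩
    rw [qb_succ, ih _ (by omega), ih _ (by omega)]; simp

lemma qb_self (n : ℕ) : qBinom n n = 1 := by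
  induction n with
  | zero => exact qb_zero 0
  | succ n ih => rw [qb_succ, ih, qb_gt n (n + 1) (by omega)]; simp

lemma qb_rel (N : ℕ) : ∀ k,
    (X : ℚ[X]) ^ k * (1 - X ^ (k + 1)) * qBinom N (k + 1) = (X ^ k - X ^ N) * qBinom N k := by
  induction N with
  | zero =>
    intro k
    rw [qb_zero_succ]
    cases k with
    | zero => simp
    | succ k => rw [qb_zero_succ]; simp
  | succ N ih =>
    intro k
    cases k with
    | zero =>
      have h := ih 0
      rw [qb_succ]
      simp only [qb_zero] at h ⊢
      linear_combination X * h
    | succ k =>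
      have h := ih k
      have h2 := ih (k + 1)
      rw [qb_succ N (k + 1), qb_succ N k]
      linear_combination X ^ (k + 2) * h2 + X * h

lemma qb_abs (N k : ℕ) :
    (1 - (X : ℚ[X]) ^ (k + 1)) * qBinom (N + 1) (k + 1) = (1 - X ^ (N + 1)) * qBinom N k := by
  have h := qb_rel N k
  rw [qb_succ]
  linear_combination X * h

lemma qb_rule2 (N k : ℕ) :
    (X : ℚ[X]) ^ k * qBinom (N + 1) (k + 1) = X ^ k * qBinom N (k + 1) + X ^ N * qBinom N k := by
  have h := qb_rel N k
  rw [qb_succ]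
  linear_combination -h

/-! ### The finite form of the sum -/

lemma step (n d t : ℕ) :
    (X : ℚ[X]) ^ (d + 4 * d * t + 6 * t ^ 2 + 3 * t) *
        (qBinom (2 * (n + 1)) (n + 1 + (d + 3 * t + 1)) - qBinom (2 * n) (n + (d + 3 * t + 1)))
      - X ^ (3 + 3 * d + 4 * d * t + 6 * t ^ 2 + 9 * t) *
        (qBinom (2 * (n + 1)) (n + 1 + (d + 3 * t + 2)) - qBinom (2 * n) (n + (d + 3 * t + 2)))
      = X ^ (n + 4 * d * t + 6 * t ^ 2) * qBinom (2 * n) (n + (d + 3 * t))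
        - X ^ (n + 4 * d * (t + 1) + 6 * (t + 1) ^ 2) * qBinom (2 * n) (n + (d + 3 * (t + 1))) := by
  have key : ∀ j, (X : ℚ[X]) ^ j * (1 - X ^ (n + j + 1)) * qBinom (2 * n) (n + (j + 1))
      = (X ^ j - X ^ n) * qBinom (2 * n) (n + j) := by
    intro j
    have h := qb_rel (2 * n) (n + j)
    have hX : (X : ℚ[X]) ^ n ≠ 0 := pow_ne_zero _ X_ne_zero
    apply mul_left_cancel₀ hX
    rw [← add_assoc n j 1]
    linear_combination h
  have expand : ∀ j, qBinom (2 * (n + 1)) (n + 1 + (j + 1)) = qBinom (2 * n) (n + j)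
      + (X ^ (n + j + 1) + X ^ (n + j + 2)) * qBinom (2 * n) (n + (j + 1))
      + X ^ (2 * (n + j + 2)) * qBinom (2 * n) (n + (j + 2)) := by
    intro j
    rw [show 2 * (n + 1) = 2 * n + 1 + 1 by ring, show n + 1 + (j + 1) = n + j + 1 + 1 by ring,
      qb_succ, qb_succ, qb_succ, show n + (j + 1) = n + j + 1 by ring,
      show n + (j + 2) = n + j + 1 + 1 by ring]
    ring
  have e1 := expand (d + 3 * t)
  have e2 := expand (d + 3 * t + 1)
  have k0 := key (d + 3 * t)
  have k1 := key (d + 3 * t + 1)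
  have k2 := key (d + 3 * t + 2)
  rw [show d + 3 * t + 2 = d + 3 * t + 1 + 1 by ring, e1, e2]
  rw [show d + 3 * (t + 1) = d + 3 * t + 3 by ring]
  simp only [show d + 3 * t + 1 + 1 = d + 3 * t + 2 by ring,
    show d + 3 * t + 2 + 1 = d + 3 * t + 3 by ring] at *
  generalize qBinom (2 * n) (n + (d + 3 * t)) = B0 at *
  generalize qBinom (2 * n) (n + (d + 3 * t + 1)) = B1 at *
  generalize qBinom (2 * n) (n + (d + 3 * t + 2)) = B2 at *
  generalize qBinom (2 * n) (n + (d + 3 * t + 3)) = B3 at *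
  clear e1 e2 expand key
  have p1 : (X : ℚ[X]) ^ (d + 4 * d * t + 6 * t ^ 2 + 3 * t)
    = X ^ (4 * d * t + 6 * t ^ 2) * X ^ (d + 3 * t) := by ring
  have p2 : (X : ℚ[X]) ^ (3 + 3 * d + 4 * d * t + 6 * t ^ 2 + 9 * t)
    = X ^ (4 * d * t + 6 * t ^ 2) * (X ^ (d + 3 * t)) ^ 3 * X ^ 3 := by ring
  have p3 : (X : ℚ[X]) ^ (n + 4 * d * t + 6 * t ^ 2)
    = X ^ (4 * d * t + 6 * t ^ 2) * X ^ n := by ring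
  have p4 : (X : ℚ[X]) ^ (n + 4 * d * (t + 1) + 6 * (t + 1) ^ 2)
    = X ^ (4 * d * t + 6 * t ^ 2) * X ^ n * (X ^ (d + 3 * t)) ^ 4 * X ^ 6 := by ring
  rw [p1, p2, p3, p4]
  simp only [pow_add X n, pow_add X (n + _), pow_add X (d + 3 * t), pow_add X (n + _ + _),
    show 2 * (n + (d + 3 * t) + 2) = n + n + (d + 3 * t) + (d + 3 * t) + 4 by ring,
    show 2 * (n + (d + 3 * t + 1) + 2) = n + n + (d + 3 * t) + (d + 3 * t) + 6 by ring,
    pow_add X (n + n + (d + 3 * t) + (d + 3 * t))] at *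
  generalize (X : ℚ[X]) ^ (d + 3 * t) = u at *
  generalize (X : ℚ[X]) ^ n = y at *
  generalize (X : ℚ[X]) ^ (4 * d * t + 6 * t ^ 2) = g at *
  linear_combination (-g) * k0 + g * u ^ 2 * X ^ 2 * k1 + g * u ^ 3 * y * X ^ 4 * k2

lemma sum_formula (d M n : ℕ) (hn : n ≤ 3 * M) :
    ∑ k ∈ range n, (X : ℚ[X]) ^ k * qBinom (2 * k) (k + d) =
      ∑ t ∈ range M, (X ^ (d + 4 * d * t + 6 * t ^ 2 + 3 * t) * qBinom (2 * n) (n + (d + 3 * t + 1))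
        - X ^ (3 + 3 * d + 4 * d * t + 6 * t ^ 2 + 9 * t) *
            qBinom (2 * n) (n + (d + 3 * t + 2))) := by
  induction n with
  | zero =>
    simp only [range_zero, sum_empty]
    symm
    apply sum_eq_zero
    intro t _
    rw [qb_gt _ _ (by omega), qb_gt _ _ (by omega)]; simp
  | succ n ih =>
    rw [sum_range_succ, ih (by omega), add_comm, ← eq_sub_iff_add_eq, ← sum_sub_distrib]
    have : ∀ t ∈ range M,
      ((X : ℚ[X]) ^ (d + 4 * d * t + 6 * t ^ 2 + 3 * t) *
          qBinom (2 * (n + 1)) (n + 1 + (d + 3 * t + 1))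
        - X ^ (3 + 3 * d + 4 * d * t + 6 * t ^ 2 + 9 * t) *
            qBinom (2 * (n + 1)) (n + 1 + (d + 3 * t + 2))) -
      (X ^ (d + 4 * d * t + 6 * t ^ 2 + 3 * t) * qBinom (2 * n) (n + (d + 3 * t + 1))
        - X ^ (3 + 3 * d + 4 * d * t + 6 * t ^ 2 + 9 * t) *
            qBinom (2 * n) (n + (d + 3 * t + 2))) =
      X ^ (n + 4 * d * t + 6 * t ^ 2) * qBinom (2 * n) (n + (d + 3 * t))
        - X ^ (n + 4 * d * (t + 1) + 6 * (t + 1) ^ 2) *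
          qBinom (2 * n) (n + (d + 3 * (t + 1))) := by
      intro t _
      rw [← step]; ring
    rw [sum_congr rfl this,
      sum_range_sub' (fun t => (X : ℚ[X]) ^ (n + 4 * d * t + 6 * t ^ 2) *
        qBinom (2 * n) (n + (d + 3 * t))) M]
    rw [qb_gt (2 * n) (n + (d + 3 * M)) (by omega)]
    simp

/-! ### The alternating sums `a m` -/

/-- `(-1)^k q^(k(k-1)/2)`. -/
noncomputable def sg : ℕ → ℚ[X]
  | 0 => 1
  | k + 1 => -(X ^ k * sg k)

noncomputable def aE (m : ℕ) : ℚ[X] := ∑ k ∈ range (m + 1), sg k * qBinom (m - k) k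

noncomputable def cE (m : ℕ) : ℚ[X] := ∑ k ∈ range (m + 1), sg k * X ^ k * qBinom (m - k) k

lemma aE_succ (m : ℕ) : aE (m + 2) = 1 + ∑ k ∈ range (m + 1), sg (k + 1) * qBinom (m - k + 1) (k + 1) := by
  unfold aE
  rw [sum_range_succ', sum_range_succ, show m + 2 - (m + 1 + 1) = 0 by omega,
    qb_zero_succ, qb_zero, sg]
  rw [mul_zero, add_zero, mul_one, add_comm]
  congr 1
  apply sum_congr rfl
  intro k hk
  rw [mem_range] at hk
  rw [show m + 2 - (k + 1) = m - k + 1 by omega]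

lemma cE_succ2 (m : ℕ) : cE (m + 2) =
    1 + ∑ k ∈ range (m + 1), sg (k + 1) * X ^ (k + 1) * qBinom (m - k + 1) (k + 1) := by
  unfold cE
  rw [sum_range_succ', sum_range_succ, show m + 2 - (m + 1 + 1) = 0 by omega,
    qb_zero_succ, qb_zero, sg]
  rw [mul_zero, add_zero, mul_one, add_comm, pow_zero, mul_one]
  congr 1
  apply sum_congr rfl
  intro k hk
  rw [mem_range] at hk
  rw [show m + 2 - (k + 1) = m - k + 1 by omega]

lemma cE_succ (m : ℕ) : cE (m + 1) =
    1 + ∑ k ∈ range (m + 1), sg (k + 1) * X ^ (k + 1) * qBinom (m - k) (k + 1) := by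
  unfold cE
  rw [sum_range_succ', qb_zero, sg]
  rw [mul_one, add_comm, pow_zero, mul_one]
  congr 1
  apply sum_congr rfl
  intro k hk
  rw [show m + 1 - (k + 1) = m - k by omega]

lemma rec1 (m : ℕ) : aE (m + 2) = cE (m + 1) - cE m := by
  rw [aE_succ, cE_succ, add_sub_assoc]
  unfold cE
  rw [← sum_sub_distrib]
  congr 1
  apply sum_congr rfl
  intro k hk
  rw [qb_succ, sg]
  ring

lemma rec2 (m : ℕ) : cE (m + 2) = cE (m + 1) - X ^ (m + 1) * aE m := by
  rw [cE_succ2, cE_succ, add_sub_assoc]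
  unfold aE
  rw [mul_sum, ← sum_sub_distrib]
  congr 1
  apply sum_congr rfl
  intro k hk
  rw [mem_range] at hk
  have h := qb_rule2 (m - k) k
  have e : (X : ℚ[X]) ^ (m + 1) = X ^ (m - k) * X ^ k * X := by
    rw [← pow_add, ← pow_succ]; congr 1; omega
  rw [sg, e]
  linear_combination (-(sg k * X ^ (k + 1))) * h

lemma aE_rec (m : ℕ) : aE (m + 3) = -(X ^ (m + 1) * aE m) := by
  rw [rec1, rec2]; ring

noncomputable def pp : ℕ → ℚ[X]
  | 0 => 1
  | s + 1 => -(X ^ (3 * s + 1) * pp s)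

lemma aE_all (s : ℕ) : aE (3 * s) = pp s ∧ aE (3 * s + 1) = X ^ s * pp s ∧ aE (3 * s + 2) = 0 := by
  induction s with
  | zero =>
    refine ⟨?_, ?_, ?_⟩
    · simp [aE, pp, sg, qBinom]
    · simp [aE, pp, sg, qBinom, sum_range_succ]
    · simp [aE, sg, qBinom, sum_range_succ]
  | succ s ih =>
    obtain ⟨h0, h1, h2⟩ := ih
    refine ⟨?_, ?_, ?_⟩
    · rw [show 3 * (s + 1) = 3 * s + 3 by ring, aE_rec, h0, pp]
    · rw [show 3 * (s + 1) + 1 = 3 * s + 1 + 3 by ring, aE_rec, h1, pp]; ring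
    · rw [show 3 * (s + 1) + 2 = 3 * s + 2 + 3 by ring, aE_rec, h2]; ring

noncomputable def KK : ℕ → ℕ → ℚ[X]
  | _, 0 => 1
  | 0, _ + 1 => 0
  | i + 1, k + 1 => qBinom (i + 1) (k + 1) + X ^ (i + 1) * qBinom i k

lemma KK_zero (i : ℕ) : KK i 0 = 1 := by cases i <;> simp [KK]

lemma KK_abs (i k : ℕ) : (1 - (X : ℚ[X]) ^ i) * KK i k = (1 - X ^ (i + k)) * qBinom i k := by
  cases k with
  | zero => rw [KK_zero, qb_zero]; simp
  | succ k =>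
    cases i with
    | zero => rw [qb_zero_succ]; simp
    | succ i =>
      have h := qb_abs i k
      rw [KK]
      linear_combination (-(X : ℚ[X]) ^ (i + 1)) * h

/-- `L_m = a_m + a_{m+1}` as a sum over `i + k = m`. -/
lemma L_eq (m : ℕ) (hm : 2 ≤ m) :
    aE m + aE (m + 1) = ∑ i ∈ range (m + 1), sg (m - i) * KK i (m - i) := by
  obtain ⟨m, rfl⟩ : ∃ j, m = j + 2 := ⟨m - 2, by omega⟩
  rw [← sum_range_reflect]
  rw [show m + 2 + 1 = m + 3 by ring, aE_rec, aE_succ,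
    sum_range_succ' _ (m + 2), sum_range_succ _ (m + 1)]
  have e1 : sg (m + 2 - (m + 3 - 1 - 0)) * KK (m + 3 - 1 - 0) (m + 2 - (m + 3 - 1 - 0)) = 1 := by
    rw [show m + 2 - (m + 3 - 1 - 0) = 0 by omega, KK_zero, sg, mul_one]
  have e2 : sg (m + 2 - (m + 3 - 1 - (m + 1 + 1))) *
      KK (m + 3 - 1 - (m + 1 + 1)) (m + 2 - (m + 3 - 1 - (m + 1 + 1))) = 0 := by
    rw [show m + 3 - 1 - (m + 1 + 1) = 0 by omega, show m + 2 - 0 = m + 1 + 1 by omega, KK, mul_zero]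
  rw [e1, e2, aE, mul_sum, ← sub_eq_add_neg, add_sub_assoc, ← sum_sub_distrib, add_zero, add_comm]
  congr 1
  apply sum_congr rfl
  intro k hk
  rw [mem_range] at hk
  rw [show m + 2 - (m + 3 - 1 - (k + 1)) = k + 1 by omega,
    show m + 3 - 1 - (k + 1) = m - k + 1 by omega, KK]
  have e : (X : ℚ[X]) ^ (m + 1) = X ^ (m - k) * X ^ k * X := by
    rw [← pow_add, ← pow_succ]; congr 1; omega
  rw [e, sg]; ring

/-- the q-binomial theorem at `z = 1`. -/
lemma qbt (i : ℕ) : ∀ R, i + 1 < R → ∑ k ∈ range R, sg k * qBinom (i + 1) k = 0 := by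
  intro R hR
  have key : ∀ r, ∑ k ∈ range (r + 1), sg k * qBinom (i + 1) k = sg r * X ^ r * qBinom i r := by
    intro r
    induction r with
    | zero => simp [qb_zero]
    | succ r ih => rw [sum_range_succ, ih, qb_succ, sg]; ring
  obtain ⟨r, rfl⟩ : ∃ r, R = r + 1 := ⟨R - 1, by omega⟩
  rw [key, qb_gt _ _ (by omega), mul_zero]

/-! ### Evaluation at a primitive root of unity -/

/-- evaluation at `z`. -/
noncomputable abbrev ev (z : ℂ) : ℚ[X] →ₐ[ℚ] ℂ := aeval z

/-- the Euler derivative at `z`. -/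
noncomputable def dd (z : ℂ) (f : ℚ[X]) : ℂ := z * aeval z (derivative f)

noncomputable def ww (z : ℂ) (i : ℕ) : ℂ := (1 - z ^ i)⁻¹

lemma ww_zero (z : ℂ) : ww z 0 = 0 := by simp [ww]

lemma dd_mul (z : ℂ) (f g : ℚ[X]) : dd z (f * g) = dd z f * ev z g + ev z f * dd z g := by
  simp only [dd, derivative_mul, map_add, map_mul]; ring

lemma dd_add (z : ℂ) (f g : ℚ[X]) : dd z (f + g) = dd z f + dd z g := by
  simp only [dd, derivative_add, map_add]; ring

lemma dd_sub (z : ℂ) (f g : ℚ[X]) : dd z (f - g) = dd z f - dd z g := by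
  simp only [dd, derivative_sub, map_sub]; ring

lemma dd_neg (z : ℂ) (f : ℚ[X]) : dd z (-f) = -dd z f := by
  simp only [dd, derivative_neg, map_neg]; ring

lemma dd_one (z : ℂ) : dd z 1 = 0 := by simp [dd]

lemma dd_zero (z : ℂ) : dd z 0 = 0 := by simp [dd]

lemma dd_sum (z : ℂ) (s : Finset ℕ) (f : ℕ → ℚ[X]) :
    dd z (∑ i ∈ s, f i) = ∑ i ∈ s, dd z (f i) := by
  simp only [dd, derivative_sum, map_sum, mul_sum]

lemma dd_pow (z : ℂ) (a : ℕ) : dd z (X ^ a) = a * z ^ a := by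
  cases a with
  | zero => simp [dd]
  | succ a => simp [dd, derivative_X_pow]; ring

lemma ev_pow (z : ℂ) (a : ℕ) : ev z (X ^ a) = z ^ a := by simp

section root

variable {z : ℂ} {n : ℕ}

lemma ne_of_lt (hz : IsPrimitiveRoot z n) {j : ℕ} (h0 : 0 < j) (hj : j < n) : 1 - z ^ j ≠ 0 :=
  sub_ne_zero.2 (hz.pow_ne_one_of_pos_of_lt h0.ne' hj).symm

lemma ww_mul (hz : IsPrimitiveRoot z n) {j : ℕ} (h0 : 0 < j) (hj : j < n) :
    ww z j * (1 - z ^ j) = 1 := inv_mul_cancel₀ (ne_of_lt hz h0 hj)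

lemma b_n (hz : IsPrimitiveRoot z n) {k : ℕ} (h0 : 0 < k) (hk : k < n) :
    ev z (qBinom n k) = 0 := by
  have hne := ne_of_lt hz h0 hk
  have h1 := hz.pow_eq_one
  obtain ⟨m, rfl⟩ : ∃ j, n = j + 1 := ⟨n - 1, by omega⟩
  obtain ⟨j, rfl⟩ : ∃ j, k = j + 1 := ⟨k - 1, by omega⟩
  have h := congrArg (ev z) (qb_abs m j)
  simp only [map_mul, map_sub, map_one, ev_pow, h1, sub_self, zero_mul] at h
  exact (mul_eq_zero.1 h).resolve_left hne

lemma ev_succ (z : ℂ) (i k : ℕ) : ev z (qBinom (i + 1) (k + 1)) =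
    ev z (qBinom i k) + z ^ (k + 1) * ev z (qBinom i (k + 1)) := by
  rw [qb_succ, map_add, map_mul, ev_pow]

lemma b_shift1 (hz : IsPrimitiveRoot z n) (i : ℕ) : ∀ k, k < n →
    ev z (qBinom (n + i) k) = ev z (qBinom i k) := by
  induction i with
  | zero =>
    intro k hk
    cases k with
    | zero => rw [qb_zero, qb_zero]
    | succ k => rw [add_zero, b_n hz (by omega) hk, qb_zero_succ, map_zero]
  | succ i ih =>
    intro k hk
    cases k with
    | zero => rw [qb_zero, qb_zero]
    | succ k => rw [← add_assoc, ev_succ, ev_succ, ih k (by omega), ih _ hk]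

lemma b_shift2 (hz : IsPrimitiveRoot z n) (hn : 0 < n) (i : ℕ) : ∀ k,
    ev z (qBinom (n + i) (n + k)) = ev z (qBinom i (n + k)) + ev z (qBinom i k) := by
  induction i with
  | zero =>
    intro k
    rw [qb_gt 0 (n + k) (by omega)]
    cases k with
    | zero => rw [qb_self, qb_zero]; simp
    | succ k => rw [qb_gt _ _ (by omega), qb_zero_succ]; simp
  | succ i ih =>
    intro k
    cases k with
    | zero =>
      have h0 := ih 0
      have h1 := b_shift1 hz i (n - 1) (by omega)
      obtain ⟨m, rfl⟩ : ∃ j, n = j + 1 := ⟨n - 1, by omega⟩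
      have h2 := hz.pow_eq_one
      simp only [add_zero, Nat.add_sub_cancel, qb_zero, map_one] at h0 h1 ⊢
      rw [← add_assoc, ev_succ, ev_succ, h0, h1, h2]; ring
    | succ k =>
      have h0 := ih k
      have h1 := ih (k + 1)
      rw [← add_assoc, ← add_assoc, ev_succ, ev_succ, ev_succ]
      rw [← add_assoc] at h1
      rw [h0, h1, show n + k + 1 = n + (k + 1) by ring, pow_add, hz.pow_eq_one]; ring

lemma rho_rec (hz : IsPrimitiveRoot z n) (k : ℕ) (hk : k + 1 < n) :
    z ^ (k + 1) * ev z (qBinom (n - 1) (k + 1)) = -ev z (qBinom (n - 1) k) := by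
  have h := b_n hz (by omega) hk
  obtain ⟨m, rfl⟩ : ∃ j, n = j + 1 := ⟨n - 1, by omega⟩
  rw [ev_succ] at h
  simp only [Nat.add_sub_cancel]
  linear_combination h

lemma sg_rho (hz : IsPrimitiveRoot z n) (k : ℕ) (hk : k < n) :
    ev z (sg (k + 1)) * ev z (qBinom (n - 1) k) = -1 := by
  induction k with
  | zero => simp [sg, qb_zero]
  | succ k ih =>
    have h := rho_rec hz k hk
    have ih := ih (by omega)
    rw [sg, map_neg, map_mul, ev_pow]
    linear_combination (-ev z (sg (k + 1))) * h + ih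

lemma ev_B (hz : IsPrimitiveRoot z n) (j : ℕ) (hj : j + 1 < n) :
    ev z (qBinom (2 * n) (n + (j + 1))) = 0 := by
  rw [two_mul, b_shift2 hz (by omega), qb_gt _ _ (by omega), b_n hz (by omega) hj]; simp

lemma dd_B (hz : IsPrimitiveRoot z n) (j : ℕ) (hj : j + 1 < n) :
    dd z (qBinom (2 * n) (n + (j + 1))) =
      -(2 * n) * ev z (qBinom (n - 1) j) * ww z (j + 1) := by
  have h0 := ev_B hz j hj
  have hw := ww_mul hz (by omega) hj
  have h := congrArg (dd z) (qb_abs (2 * n - 1) (n + j))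
  have h2 : z ^ (2 * n) = 1 := by rw [mul_comm, pow_mul, hz.pow_eq_one, one_pow]
  have h3 : ev z (qBinom (2 * n - 1) (n + j)) = ev z (qBinom (n - 1) j) := by
    rw [show 2 * n - 1 = n + (n - 1) by omega, b_shift2 hz (by omega), qb_gt _ _ (by omega)]; simp
  rw [show 2 * n - 1 + 1 = 2 * n by omega, add_assoc] at h
  simp only [dd_mul, dd_sub, dd_one, dd_pow, map_sub, map_one, ev_pow, h0, h2, h3,
    pow_add z n, hz.pow_eq_one] at h
  push_cast at h
  linear_combination ww z (j + 1) * h - dd z (qBinom (2 * n) (n + (j + 1))) * hw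

lemma ev_KK (hz : IsPrimitiveRoot z n) (i k m : ℕ) (hi : i < n) (hm : z ^ (i + k) = z ^ m)
    (h : i = 0 → k ≠ 0) :
    ev z (KK i k) = (1 - z ^ m) * (ww z i * ev z (qBinom i k)) := by
  rcases Nat.eq_zero_or_pos i with rfl | h0
  · obtain ⟨k, rfl⟩ : ∃ j, k = j + 1 := ⟨k - 1, by have := h rfl; omega⟩
    rw [KK, ww_zero]; simp
  · have h := congrArg (ev z) (KK_abs i k)
    have hw := ww_mul hz h0 hi
    simp only [map_mul, map_sub, map_one, ev_pow, hm] at h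
    linear_combination ww z i * h - ev z (KK i k) * hw

lemma ev_KK_shift (hz : IsPrimitiveRoot z n) (i k : ℕ) (hk : k < n) :
    ev z (KK (n + (i + 1)) k) = ev z (KK (i + 1) k) := by
  cases k with
  | zero => rw [KK_zero, KK_zero]
  | succ k =>
    rw [← add_assoc, KK, KK]
    simp only [map_add, map_mul, ev_pow]
    rw [add_assoc, b_shift1 hz _ _ hk, b_shift1 hz _ _ (by omega), pow_add z n, hz.pow_eq_one]; ring

lemma ev_KK_n (hz : IsPrimitiveRoot z n) (m : ℕ) (hk : m + 1 < n) :
    ev z (sg (m + 1)) * ev z (KK n (m + 1)) = -1 := by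
  have h1 := b_n hz (by omega) hk
  have h2 := sg_rho hz m (by omega)
  have h3 := hz.pow_eq_one
  obtain ⟨j, rfl⟩ : ∃ j, n = j + 1 := ⟨n - 1, by omega⟩
  rw [KK, map_add, map_mul, ev_pow, h1, h3]
  simp only [Nat.add_sub_cancel] at h2
  linear_combination h2

/-- term function. -/
noncomputable def hh (z : ℂ) (i M : ℕ) : ℂ :=
  if i ≤ M then ev z (sg (M - i)) * ev z (qBinom i (M - i)) else 0

noncomputable def QQ (z : ℂ) (n m : ℕ) : ℂ :=
  ∑ i ∈ range n, ww z i * (hh z i m + hh z i (n + m))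

lemma QQ_eq (hz : IsPrimitiveRoot z n) (m : ℕ) (h0 : 0 < m) (hm : m < n) :
    ww z m * (ev z (aE (n + m)) + ev z (aE (n + m + 1)) + 1) = QQ z n m := by
  have h := congrArg (ev z) (L_eq (n + m) (by omega))
  have hw := ww_mul hz h0 hm
  suffices hs : ev z (aE (n + m)) + ev z (aE (n + m + 1)) + 1 = (1 - z ^ m) * QQ z n m by
    rw [hs]; linear_combination QQ z n m * hw
  rw [← map_add, h, map_sum, add_assoc, sum_range_add, sum_range_succ']
  have e1 : ∀ i ∈ range n, ev z (sg (n + m - i) * KK i (n + m - i)) =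
      (1 - z ^ m) * (ww z i * hh z i (n + m)) := by
    intro i hi
    rw [mem_range] at hi
    rw [map_mul, ev_KK hz i (n + m - i) m hi, hh, if_pos (by omega)]
    · ring
    · rw [show i + (n + m - i) = n + m by omega, pow_add, hz.pow_eq_one, one_mul]
    · omega
  have e2 : ∀ i ∈ range m, ev z (sg (n + m - (n + (i + 1))) *
      KK (n + (i + 1)) (n + m - (n + (i + 1)))) =
      (1 - z ^ m) * (ww z (i + 1) * hh z (i + 1) m) := by
    intro i hi
    rw [mem_range] at hi
    rw [show n + m - (n + (i + 1)) = m - (i + 1) by omega, map_mul, ev_KK_shift hz _ _ (by omega),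
      ev_KK hz (i + 1) (m - (i + 1)) m (by omega), hh, if_pos (by omega)]
    · ring
    · rw [show i + 1 + (m - (i + 1)) = m by omega]
    · omega
  have e3 : ev z (sg (n + m - (n + 0)) * KK (n + 0) (n + m - (n + 0))) = -1 := by
    obtain ⟨j, rfl⟩ : ∃ j, m = j + 1 := ⟨m - 1, by omega⟩
    rw [show n + (j + 1) - (n + 0) = j + 1 by omega, map_mul, add_zero, ev_KK_n hz j hm]
  have e4 : ∑ i ∈ range n, ww z i * hh z i m = ∑ i ∈ range m, ww z (i + 1) * hh z (i + 1) m := by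
    obtain ⟨r, rfl⟩ : ∃ r, n = m + 1 + r := ⟨n - m - 1, by omega⟩
    rw [sum_range_add, sum_range_succ', ww_zero]
    rw [sum_eq_zero (s := range r)]
    · ring
    · intro i _
      rw [hh, if_neg (by omega), mul_zero]
  rw [sum_congr rfl e1, sum_congr rfl e2, e3, ← mul_sum, ← mul_sum, QQ]
  simp only [mul_add, sum_add_distrib]
  rw [e4]; ring

lemma QQ_sum (z : ℂ) (n : ℕ) : ∑ m ∈ range n, QQ z n m = 0 := by
  simp only [QQ]
  rw [sum_comm]
  apply sum_eq_zero
  intro i hi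
  rw [mem_range] at hi
  rw [← mul_sum]
  rcases Nat.eq_zero_or_pos i with rfl | h0
  · rw [ww_zero, zero_mul]
  rw [sum_add_distrib, ← sum_range_add]
  obtain ⟨r, hr⟩ : ∃ r, n + n = i + r := ⟨n + n - i, by omega⟩
  rw [hr, sum_range_add, sum_eq_zero (s := range i)]
  · obtain ⟨i, rfl⟩ : ∃ j, i = j + 1 := ⟨i - 1, by omega⟩
    have h := congrArg (ev z) (qbt i r (by omega))
    rw [map_sum, map_zero] at h
    rw [zero_add, ← mul_zero (ww z (i + 1)), ← h]
    congr 1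
    apply sum_congr rfl
    intro k _
    rw [hh, if_pos (by omega), show i + 1 + k - (i + 1) = k by omega, map_mul]
  · intro m hm
    rw [mem_range] at hm
    rw [hh, if_neg (by omega)]

lemma dd_L (hz : IsPrimitiveRoot z n) (hn : 2 ≤ n) :
    dd z (aE n) + dd z (aE (n + 1)) = -n * QQ z n 0 := by
  rw [← dd_add, L_eq n hn, sum_range_succ, dd_add, Nat.sub_self, KK_zero, sg, mul_one, dd_one,
    add_zero, dd_sum, QQ, mul_sum]
  apply sum_congr rfl
  intro i hi
  rw [mem_range] at hi
  rcases Nat.eq_zero_or_pos i with rfl | h0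
  · obtain ⟨m, rfl⟩ : ∃ j, n = j + 1 := ⟨n - 1, by omega⟩
    rw [ww_zero, Nat.sub_zero, KK, mul_zero, dd_zero]; ring
  · have hw := ww_mul hz h0 hi
    have h1 : ev z (KK i (n - i)) = 0 := by
      rw [ev_KK hz i (n - i) 0 hi]
      · simp
      · rw [show i + (n - i) = n by omega, hz.pow_eq_one, pow_zero]
      · omega
    have h := congrArg (dd z) (KK_abs i (n - i))
    rw [show i + (n - i) = n by omega] at h
    simp only [dd_mul, dd_sub, dd_one, dd_pow, map_sub, map_one, ev_pow, h1, hz.pow_eq_one] at h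
    rw [dd_mul, h1, hh, if_neg (by omega), hh, if_pos (by omega), add_zero]
    linear_combination ev z (sg (n - i)) * ww z i * h - ev z (sg (n - i)) * dd z (KK i (n - i)) * hw

lemma ww_reflect (hz : IsPrimitiveRoot z n) {j k : ℕ} (h0 : 0 < j) (hk : 0 < k) (h : j + k = n) :
    ww z k = 1 - ww z j := by
  have h1 := ww_mul hz h0 (by omega)
  have h2 := ww_mul hz hk (by omega)
  have h3 : z ^ j * z ^ k = 1 := by rw [← pow_add, h, hz.pow_eq_one]
  linear_combination (1 - ww z k) * h1 - ww z j * z ^ j * h2 - ww z j * ww z k * h3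

lemma ww_sum (hz : IsPrimitiveRoot z n) (hn : 0 < n) : ∑ m ∈ range n, ww z m = (n - 1) / 2 := by
  obtain ⟨m, rfl⟩ : ∃ j, n = j + 1 := ⟨n - 1, by omega⟩
  rw [sum_range_succ', ww_zero, add_zero]
  have h := sum_range_reflect (fun i => ww z (i + 1)) m
  have h2 : ∑ j ∈ range m, ww z (m - 1 - j + 1) = ∑ j ∈ range m, (1 - ww z (j + 1)) := by
    apply sum_congr rfl
    intro j hj
    rw [mem_range] at hj
    exact ww_reflect hz (by omega) (by omega) (by omega)
  rw [h2, sum_sub_distrib] at h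
  simp only [sum_const, card_range, nsmul_eq_mul, mul_one] at h
  push_cast
  linear_combination (-1 / 2) * h

end root


/-! ### Evaluation at a root of unity of order `3 * (M + 1)` -/

noncomputable def rr (z : ℂ) (M k : ℕ) : ℂ := ev z (qBinom (3 * (M + 1) - 1) k)

noncomputable def AA (z : ℂ) (s : ℕ) : ℂ := ev z (pp s)

noncomputable def ff (z : ℂ) (M t : ℕ) : ℂ := z ^ (6 * t ^ 2 + 3 * t) * rr z M (3 * t)

lemma AA_zero (z : ℂ) : AA z 0 = 1 := by simp [AA, pp]

lemma AA_succ (z : ℂ) (s : ℕ) : AA z (s + 1) = -(z ^ (3 * s + 1) * AA z s) := by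
  simp [AA, pp]

lemma dd_pp (z : ℂ) (s : ℕ) : dd z (pp s) = s * (3 * s - 1) / 2 * AA z s := by
  induction s with
  | zero => simp [pp, dd_one]
  | succ s ih =>
    have h : pp (s + 1) = -(X ^ (3 * s + 1) * pp s) := by simp [pp]
    have h2 : ev z (pp s) = AA z s := rfl
    rw [h, dd_neg, dd_mul, dd_pow, ev_pow, ih, AA_succ, h2]
    push_cast
    ring

section root3

variable {z : ℂ} {M : ℕ}

lemma rr_zero : rr z M 0 = 1 := by simp [rr, qb_zero]

lemma rr_last : rr z M (3 * M + 2) = 1 := by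
  have h : 3 * (M + 1) - 1 = 3 * M + 2 := by omega
  rw [rr, h, qb_self, map_one]

lemma rr_rec (hz : IsPrimitiveRoot z (3 * (M + 1))) (k : ℕ) (hk : k + 1 < 3 * (M + 1)) :
    z ^ (k + 1) * rr z M (k + 1) = -rr z M k := rho_rec hz k hk

lemma z_ne (hz : IsPrimitiveRoot z (3 * (M + 1))) : z ≠ 0 := hz.ne_zero (by omega)

lemma z_pow (hz : IsPrimitiveRoot z (3 * (M + 1))) (k : ℕ) : z ^ (3 * (M + 1) * k) = 1 := by
  rw [pow_mul, hz.pow_eq_one, one_pow]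

lemma om (hz : IsPrimitiveRoot z (3 * (M + 1))) :
    (z ^ (M + 1)) ^ 2 + z ^ (M + 1) + 1 = 0 := by
  have h := ne_of_lt hz (j := M + 1) (by omega) (by omega)
  have h3 : (z ^ (M + 1)) ^ 3 = 1 := by rw [← pow_mul, mul_comm, hz.pow_eq_one]
  apply mul_left_cancel₀ h
  linear_combination -h3

lemma om3 (hz : IsPrimitiveRoot z (3 * (M + 1))) : (z ^ (M + 1)) ^ 3 = 1 := by
  rw [← pow_mul, mul_comm, hz.pow_eq_one]


lemma rr_back (hz : IsPrimitiveRoot z (3 * (M + 1))) (k : ℕ) (hk : k + 1 < 3 * (M + 1)) :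
    rr z M k = -(z ^ (k + 1) * rr z M (k + 1)) := by
  rw [rr_rec hz k hk, neg_neg]

lemma ff_succ (hz : IsPrimitiveRoot z (3 * (M + 1))) (t : ℕ) (ht : t < M) :
    ff z M (t + 1) = -(z ^ (3 * t + 3) * ff z M t) := by
  simp only [ff]
  rw [rr_back hz (3 * t) (by omega), rr_back hz (3 * t + 1) (by omega),
    rr_back hz (3 * t + 2) (by omega), show 3 * (t + 1) = 3 * t + 2 + 1 by ring]
  ring

lemma ff_last (hz : IsPrimitiveRoot z (3 * (M + 1))) : ff z M M = 1 := by
  simp only [ff]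
  rw [rr_back hz (3 * M) (by omega), rr_back hz (3 * M + 1) (by omega), rr_last]
  linear_combination z_pow hz (2 * M + 1)

lemma ff_zero : ff z M 0 = 1 := by simp [ff, rr_zero]

lemma ff_reflect (hz : IsPrimitiveRoot z (3 * (M + 1))) (t : ℕ) :
    ∀ u, t + u = M → ff z M u = ff z M t := by
  induction t with
  | zero => intro u hu; rw [show u = M by omega, ff_last hz, ff_zero]
  | succ t ih =>
    intro u hu
    have h1 := ih (u + 1) (by omega)
    rw [ff_succ hz u (by omega)] at h1
    rw [ff_succ hz t (by omega), ← h1]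
    have h2 : z ^ (3 * t + 3) * z ^ (3 * u + 3) = 1 := by
      rw [← pow_add, ← z_pow hz 1]; congr 1; omega
    linear_combination (-ff z M u) * h2

lemma ww_z (hz : IsPrimitiveRoot z (3 * (M + 1))) {j k : ℕ} (h0 : 0 < j) (hk : 0 < k)
    (h : j + k = 3 * (M + 1)) : z ^ j * ww z j = - ww z k := by
  rw [ww_reflect hz h0 hk h]
  linear_combination -(ww_mul hz h0 (by omega))

lemma S0_zero (hz : IsPrimitiveRoot z (3 * (M + 1))) :
    ∑ t ∈ range (M + 1), (z ^ (6 * t ^ 2 + 3 * t) * (rr z M (3 * t) * ww z (3 * t + 1)) -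
      z ^ (3 + 6 * t ^ 2 + 9 * t) * (rr z M (3 * t + 1) * ww z (3 * t + 2))) = 0 := by
  have h1 : ∀ t ∈ range (M + 1), z ^ (6 * t ^ 2 + 3 * t) * (rr z M (3 * t) * ww z (3 * t + 1)) -
      z ^ (3 + 6 * t ^ 2 + 9 * t) * (rr z M (3 * t + 1) * ww z (3 * t + 2)) =
      ff z M t * ww z (3 * t + 1) - ff z M (M - t) * ww z (3 * (M - t) + 1) := by
    intro t ht
    rw [mem_range] at ht
    rw [ff_reflect hz t (M - t) (by omega)]
    have h := ww_z hz (j := 3 * t + 2) (k := 3 * (M - t) + 1) (by omega) (by omega) (by omega)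
    simp only [ff]
    rw [rr_back hz (3 * t) (by omega)]
    linear_combination (-(z ^ (6 * t ^ 2 + 6 * t + 1) * rr z M (3 * t + 1))) * h
  rw [sum_congr rfl h1, sum_sub_distrib]
  have h := sum_range_reflect (fun t => ff z M t * ww z (3 * t + 1)) (M + 1)
  simp only [add_tsub_cancel_right] at h
  rw [h, sub_self]

lemma gg (hz : IsPrimitiveRoot z (3 * (M + 1))) (t : ℕ) (ht : t ≤ M) :
    z ^ (6 * t ^ 2 + 7 * t + 2) * rr z M (3 * t + 1) = AA z (t + 1) := by
  induction t with
  | zero =>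
    have h := rr_rec hz 0 (by omega)
    rw [rr_zero] at h
    rw [AA_succ, AA_zero]
    simp only [mul_zero, zero_add] at *
    linear_combination z * h
  | succ t ih =>
    rw [AA_succ, ← ih (by omega), rr_back hz (3 * t + 1) (by omega),
      rr_back hz (3 * t + 2) (by omega), rr_back hz (3 * t + 3) (by omega),
      show 3 * (t + 1) + 1 = 3 * t + 3 + 1 by ring]
    ring

lemma gg2 (hz : IsPrimitiveRoot z (3 * (M + 1))) (t : ℕ) (ht : t ≤ M) :
    z ^ (6 * t ^ 2 + 13 * t + 7) * rr z M (3 * t + 2) = -(z ^ (3 * t + 3) * AA z (t + 1)) := by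
  rw [← gg hz t ht, rr_back hz (3 * t + 1) (by omega)]
  ring

lemma AA_N (hz : IsPrimitiveRoot z (3 * (M + 1))) : AA z (M + 1) = -z ^ (M + 1) := by
  rw [← gg hz M le_rfl, rr_back hz (3 * M + 1) (by omega), rr_last]
  have h := z_pow hz (2 * M + 1)
  linear_combination (-z ^ (M + 1)) * h

lemma AA_add (hz : IsPrimitiveRoot z (3 * (M + 1))) (s : ℕ) :
    AA z (M + 1 + s) = -(z ^ (M + 1) * AA z s) := by
  induction s with
  | zero => rw [add_zero, AA_N hz, AA_zero, mul_one]
  | succ s ih =>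
    rw [← add_assoc, AA_succ, ih, AA_succ]
    have h := z_pow hz 1
    linear_combination (z ^ (M + 1) * z ^ (3 * s + 1) * AA z s) * h

lemma AA_sub (hz : IsPrimitiveRoot z (3 * (M + 1))) (s : ℕ) :
    ∀ u, u + s = M + 1 → AA z u = -(z ^ (M + 1) * z ^ s * AA z s) := by
  induction s with
  | zero => intro u hu; rw [show u = M + 1 by omega, AA_N hz, AA_zero]; ring
  | succ s ih =>
    intro u hu
    have h1 := ih (u + 1) (by omega)
    rw [AA_succ] at h1
    rw [AA_succ]
    have h2 : z ^ (3 * s + 2) * z ^ (3 * u + 1) = 1 := by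
      rw [← pow_add, ← z_pow hz 1]; congr 1; omega
    linear_combination (-AA z u) * h2 - z ^ (3 * s + 2) * h1

noncomputable def UU (z : ℂ) (M : ℕ) : ℂ := ∑ t ∈ range (M + 1), AA z (t + 1) * ww z (3 * t + 2)

noncomputable def VV (z : ℂ) (M : ℕ) : ℂ :=
  ∑ t ∈ range M, z ^ (3 * t + 3) * AA z (t + 1) * ww z (3 * t + 3)

noncomputable def lam (z : ℂ) (M m : ℕ) : ℂ :=
  ev z (aE (3 * (M + 1) + m)) + ev z (aE (3 * (M + 1) + m + 1))

lemma lam0 (hz : IsPrimitiveRoot z (3 * (M + 1))) (s : ℕ) (hs : s ≤ M) :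
    lam z M (3 * s) = z ^ (M + 1) * (AA z (M + 1 - s) - AA z s) := by
  obtain ⟨h1, h2, h3⟩ := aE_all (M + 1 + s)
  rw [lam, show 3 * (M + 1) + 3 * s = 3 * (M + 1 + s) by ring, h1, h2, map_mul, ev_pow]
  change AA z (M + 1 + s) + _ * AA z (M + 1 + s) = _
  rw [AA_add hz, AA_sub hz s (M + 1 - s) (by omega)]
  ring

lemma lam1 (hz : IsPrimitiveRoot z (3 * (M + 1))) (s : ℕ) (hs : s ≤ M) :
    lam z M (3 * s + 1) = z ^ (M + 1) * AA z (M + 1 - s) := by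
  obtain ⟨h1, h2, h3⟩ := aE_all (M + 1 + s)
  rw [lam, show 3 * (M + 1) + (3 * s + 1) = 3 * (M + 1 + s) + 1 by ring, h2, h3, map_mul, ev_pow]
  change _ * AA z (M + 1 + s) + _ = _
  rw [AA_add hz, AA_sub hz s (M + 1 - s) (by omega), map_zero]
  ring

lemma lam2 (hz : IsPrimitiveRoot z (3 * (M + 1))) (s : ℕ) :
    lam z M (3 * s + 2) = -(z ^ (M + 1) * AA z (s + 1)) := by
  obtain ⟨h1, h2, h3⟩ := aE_all (M + 1 + s)
  obtain ⟨h4, -, -⟩ := aE_all (M + 1 + (s + 1))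
  rw [lam, show 3 * (M + 1) + (3 * s + 2) = 3 * (M + 1 + s) + 2 by ring, h3,
    show 3 * (M + 1 + s) + 2 + 1 = 3 * (M + 1 + (s + 1)) by ring, h4, map_zero, zero_add]
  exact AA_add hz _

lemma sum3 (f : ℕ → ℂ) (N : ℕ) : ∑ m ∈ range (3 * N), f m =
    ∑ s ∈ range N, (f (3 * s) + f (3 * s + 1) + f (3 * s + 2)) := by
  induction N with
  | zero => simp
  | succ N ih =>
    rw [sum_range_succ _ N, ← ih, show 3 * (N + 1) = 3 * N + 1 + 1 + 1 by ring,
      sum_range_succ, sum_range_succ, sum_range_succ]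
    ring

lemma sum_AA0 (hz : IsPrimitiveRoot z (3 * (M + 1))) :
    ∑ s ∈ range (M + 1), lam z M (3 * s) * ww z (3 * s) =
      - z ^ (M + 1) * (2 * VV z M + ∑ s ∈ range M, AA z (s + 1)) := by
  rw [sum_range_succ', mul_zero, ww_zero, mul_zero, add_zero]
  have h1 : ∑ s ∈ range M, AA z (M + 1 - (s + 1)) * ww z (3 * (s + 1)) =
      ∑ s ∈ range M, -(z ^ (3 * s + 3) * AA z (s + 1) * ww z (3 * s + 3)) := by
    rw [← sum_range_reflect]
    apply sum_congr rfl
    intro s hs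
    rw [mem_range] at hs
    have h := ww_z hz (j := 3 * s + 3) (k := 3 * (M - 1 - s + 1)) (by omega) (by omega) (by omega)
    rw [show M + 1 - (M - 1 - s + 1) = s + 1 by omega]
    linear_combination AA z (s + 1) * h
  have h2 : ∀ s ∈ range M, lam z M (3 * (s + 1)) * ww z (3 * (s + 1)) =
      z ^ (M + 1) * (AA z (M + 1 - (s + 1)) * ww z (3 * (s + 1))) -
      z ^ (M + 1) * (z ^ (3 * s + 3) * AA z (s + 1) * ww z (3 * s + 3) + AA z (s + 1)) := by
    intro s hs
    rw [mem_range] at hs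
    rw [lam0 hz _ (by omega)]
    have h := ww_mul hz (j := 3 * (s + 1)) (by omega) (by omega)
    linear_combination (-z ^ (M + 1) * AA z (s + 1)) * h
  rw [sum_congr rfl h2, sum_sub_distrib, ← mul_sum, ← mul_sum, h1, sum_add_distrib, VV,
    sum_neg_distrib]
  ring

lemma sum_AA1 (hz : IsPrimitiveRoot z (3 * (M + 1))) :
    ∑ s ∈ range (M + 1), lam z M (3 * s + 1) * ww z (3 * s + 1) =
      z ^ (M + 1) * (∑ s ∈ range (M + 1), AA z (s + 1) - UU z M) := by
  rw [← sum_range_reflect, UU, ← sum_sub_distrib, mul_sum]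
  apply sum_congr rfl
  intro s hs
  rw [mem_range] at hs
  rw [lam1 hz _ (by omega), show M + 1 - (M + 1 - 1 - s) = s + 1 by omega]
  have h := ww_reflect hz (j := 3 * s + 2) (k := 3 * (M + 1 - 1 - s) + 1) (by omega) (by omega)
    (by omega)
  rw [h]
  ring

lemma sum_AA2 (hz : IsPrimitiveRoot z (3 * (M + 1))) :
    ∑ s ∈ range (M + 1), lam z M (3 * s + 2) * ww z (3 * s + 2) = -z ^ (M + 1) * UU z M := by
  rw [UU, mul_sum]
  apply sum_congr rfl
  intro s hs
  rw [lam2 hz]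
  ring

lemma sum_lam (hz : IsPrimitiveRoot z (3 * (M + 1))) :
    ∑ m ∈ range (3 * (M + 1)), lam z M m * ww z m =
      -z ^ (M + 1) * (2 * (UU z M + VV z M) + z ^ (M + 1)) := by
  rw [sum3, sum_add_distrib, sum_add_distrib, sum_AA0 hz, sum_AA1 hz, sum_AA2 hz, sum_range_succ,
    AA_N hz]
  ring

lemma QQ0 (hz : IsPrimitiveRoot z (3 * (M + 1))) :
    QQ z (3 * (M + 1)) 0 = -(3 * (M + 1) + 1 + 2 * z ^ (M + 1)) / 6 := by
  have h := dd_L hz (by omega)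
  obtain ⟨h1, h2, -⟩ := aE_all (M + 1)
  rw [h1, h2, dd_mul, dd_pow, ev_pow, dd_pp] at h
  change _ + (_ * AA z (M + 1) + _) = _ at h
  rw [AA_N hz] at h
  have hM : (M + 1 : ℂ) ≠ 0 := by exact_mod_cast Nat.succ_ne_zero M
  push_cast at h
  apply mul_left_cancel₀ hM
  linear_combination (1 / 3) * h + (M + 1) * (3 * (M + 1) + 1) / 6 * om hz

lemma W_eq (hz : IsPrimitiveRoot z (3 * (M + 1))) :
    UU z M + VV z M = (2 + (3 * (M + 1) + 1) * (z ^ (M + 1)) ^ 2) / 6 := by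
  have h1 := sum_lam hz
  have h2 := QQ_sum z (3 * (M + 1))
  have h3 := ww_sum hz (by omega)
  have h4 : ∑ m ∈ range (3 * (M + 1)), QQ z (3 * (M + 1)) m =
      ∑ m ∈ range (3 * (M + 1)), lam z M m * ww z m + ∑ m ∈ range (3 * (M + 1)), ww z m +
        QQ z (3 * (M + 1)) 0 := by
    rw [← sum_add_distrib]
    rw [show 3 * (M + 1) = 3 * M + 2 + 1 by ring, sum_range_succ', sum_range_succ' (fun m => _ + _),
      ww_zero, mul_zero, add_zero, add_zero]
    congr 1
    apply sum_congr rfl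
    intro m hm
    rw [mem_range] at hm
    have h := QQ_eq hz (m + 1) (by omega) (by omega)
    rw [show 3 * M + 2 + 1 = 3 * (M + 1) by ring, ← h, lam]
    ring
  rw [h2, h1, h3, QQ0 hz] at h4
  push_cast at h4
  have h5 := om hz
  have h6 := om3 hz
  set w := z ^ (M + 1)
  linear_combination (w ^ 2 / 2) * h4 - (UU z M + VV z M) * h6 - 1 / 2 * h5 - (1 / 6 + w / 2) * h6

end root3

/-! ### The final assembly -/

lemma cyc_sq (n : ℕ) (hn : 0 < n) (z : ℂ) (hz : IsPrimitiveRoot z n) (P : ℚ[X])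
    (h0 : ev z P = 0) (h1 : dd z P = 0) : cyclotomic n ℚ ^ 2 ∣ P := by
  have hm : cyclotomic n ℚ = minpoly ℚ z := cyclotomic_eq_minpoly_rat hz hn
  have hr : ev z (cyclotomic n ℚ) = 0 := by rw [hm]; exact minpoly.aeval ℚ z
  obtain ⟨Q, rfl⟩ : cyclotomic n ℚ ∣ P := by rw [hm]; exact minpoly.dvd ℚ z h0
  have hs : (cyclotomic n ℚ).Separable := (cyclotomic.irreducible_rat hn).separable
  have hd : ev z (derivative (cyclotomic n ℚ)) ≠ 0 := by
    intro hd
    obtain ⟨a, b, hab⟩ := hs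
    have := congrArg (ev z) hab
    rw [map_add, map_mul, map_mul, hr, hd] at this
    simp at this
  rw [dd_mul, hr, zero_mul, add_zero, dd] at h1
  have hQ : ev z Q = 0 := by
    rcases mul_eq_zero.1 h1 with h | h
    · exact absurd h (mul_ne_zero (hz.ne_zero hn.ne') hd)
    · exact h
  obtain ⟨R, rfl⟩ : cyclotomic n ℚ ∣ Q := by rw [hm]; exact minpoly.dvd ℚ z hQ
  exact ⟨R, by ring⟩

section root4

variable {z : ℂ} {M : ℕ}

/-- the reduced form of the first sum -/
noncomputable def T0 (M : ℕ) : ℚ[X] := ∑ t ∈ range (M + 1),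
  (X ^ (6 * t ^ 2 + 3 * t) * qBinom (2 * (3 * (M + 1))) (3 * (M + 1) + (3 * t + 1)) -
    X ^ (3 + 6 * t ^ 2 + 9 * t) * qBinom (2 * (3 * (M + 1))) (3 * (M + 1) + (3 * t + 1 + 1)))

/-- the reduced form of the second sum, without its last term -/
noncomputable def T1 (M : ℕ) : ℚ[X] := ∑ t ∈ range (M + 1),
    X ^ (6 * t ^ 2 + 7 * t + 2) * qBinom (2 * (3 * (M + 1))) (3 * (M + 1) + (3 * t + 1 + 1)) -
  ∑ t ∈ range M,
    X ^ (6 * t ^ 2 + 13 * t + 7) * qBinom (2 * (3 * (M + 1))) (3 * (M + 1) + (3 * t + 2 + 1))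

lemma main_sum (M : ℕ) : ∑ k ∈ range (3 * (M + 1)), X ^ k * qCatalan k =
    T0 M - T1 M + X ^ ((M + 1) * (6 * (M + 1) + 1)) := by
  have h0 := sum_formula 0 (M + 1) (3 * (M + 1)) le_rfl
  have h1 := sum_formula 1 (M + 1) (3 * (M + 1)) le_rfl
  have h : ∀ k ∈ range (3 * (M + 1)), X ^ k * qCatalan k =
      X ^ k * qBinom (2 * k) (k + 0) - X * (X ^ k * qBinom (2 * k) (k + 1)) := by
    intro k _
    rw [qCatalan, add_zero]; ring
  rw [sum_congr rfl h, sum_sub_distrib, ← mul_sum, h0, h1]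
  have e0 : ∑ t ∈ range (M + 1), (X ^ (0 + 4 * 0 * t + 6 * t ^ 2 + 3 * t) *
      qBinom (2 * (3 * (M + 1))) (3 * (M + 1) + (0 + 3 * t + 1)) -
      X ^ (3 + 3 * 0 + 4 * 0 * t + 6 * t ^ 2 + 9 * t) *
      qBinom (2 * (3 * (M + 1))) (3 * (M + 1) + (0 + 3 * t + 2))) = T0 M := by
    rw [T0]
    apply sum_congr rfl
    intro t _
    simp only [mul_zero, zero_mul, zero_add, add_zero]
  have e1 : X * ∑ t ∈ range (M + 1), (X ^ (1 + 4 * 1 * t + 6 * t ^ 2 + 3 * t) *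
      qBinom (2 * (3 * (M + 1))) (3 * (M + 1) + (1 + 3 * t + 1)) -
      X ^ (3 + 3 * 1 + 4 * 1 * t + 6 * t ^ 2 + 9 * t) *
      qBinom (2 * (3 * (M + 1))) (3 * (M + 1) + (1 + 3 * t + 2))) =
      T1 M - X ^ ((M + 1) * (6 * (M + 1) + 1)) := by
    have h2 : ∀ t ∈ range (M + 1), X * (X ^ (1 + 4 * 1 * t + 6 * t ^ 2 + 3 * t) *
        qBinom (2 * (3 * (M + 1))) (3 * (M + 1) + (1 + 3 * t + 1)) -
        X ^ (3 + 3 * 1 + 4 * 1 * t + 6 * t ^ 2 + 9 * t) *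
        qBinom (2 * (3 * (M + 1))) (3 * (M + 1) + (1 + 3 * t + 2))) =
        X ^ (6 * t ^ 2 + 7 * t + 2) * qBinom (2 * (3 * (M + 1))) (3 * (M + 1) + (3 * t + 1 + 1)) -
        X ^ (6 * t ^ 2 + 13 * t + 7) *
          qBinom (2 * (3 * (M + 1))) (3 * (M + 1) + (3 * t + 2 + 1)) := by
      intro t _
      rw [show 1 + 3 * t + 1 = 3 * t + 1 + 1 by ring, show 1 + 3 * t + 2 = 3 * t + 2 + 1 by ring]
      ring
    rw [mul_sum, sum_congr rfl h2, sum_sub_distrib,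
      sum_range_succ (fun t => X ^ (6 * t ^ 2 + 13 * t + 7) * _) M, T1,
      show 3 * (M + 1) + (3 * M + 2 + 1) = 2 * (3 * (M + 1)) by ring, qb_self]
    ring
  rw [e0, e1]
  ring

lemma ev_T0 (hz : IsPrimitiveRoot z (3 * (M + 1))) : ev z (T0 M) = 0 := by
  rw [T0, map_sum]
  apply sum_eq_zero
  intro t ht
  rw [mem_range] at ht
  rw [map_sub, map_mul, map_mul, ev_B hz _ (by omega), ev_B hz _ (by omega)]
  ring

lemma ev_T1 (hz : IsPrimitiveRoot z (3 * (M + 1))) : ev z (T1 M) = 0 := by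
  rw [T1, map_sub, map_sum, map_sum, sum_eq_zero, sum_eq_zero, sub_zero]
  · intro t ht
    rw [mem_range] at ht
    rw [map_mul, ev_B hz _ (by omega), mul_zero]
  · intro t ht
    rw [mem_range] at ht
    rw [map_mul, ev_B hz _ (by omega), mul_zero]

lemma dd_XB (hz : IsPrimitiveRoot z (3 * (M + 1))) (a j : ℕ) (hj : j + 1 < 3 * (M + 1)) :
    dd z (X ^ a * qBinom (2 * (3 * (M + 1))) (3 * (M + 1) + (j + 1))) =
      -(6 * (M + 1)) * (z ^ a * (rr z M j * ww z (j + 1))) := by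
  rw [dd_mul, ev_B hz j hj, dd_B hz j hj, ev_pow, rr]
  push_cast
  ring

lemma dd_T0 (hz : IsPrimitiveRoot z (3 * (M + 1))) : dd z (T0 M) = 0 := by
  rw [T0, dd_sum, ← mul_zero (-(6 * (M + 1) : ℂ)), ← S0_zero hz, mul_sum]
  apply sum_congr rfl
  intro t ht
  rw [mem_range] at ht
  rw [dd_sub, dd_XB hz _ _ (by omega), dd_XB hz _ _ (by omega)]
  ring

lemma dd_T1 (hz : IsPrimitiveRoot z (3 * (M + 1))) :
    dd z (T1 M) = -(6 * (M + 1)) * (UU z M + VV z M) := by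
  rw [T1, dd_sub, dd_sum, dd_sum, UU, VV, mul_add (-(6 * (M + 1) : ℂ)), mul_sum, mul_sum, sub_eq_add_neg,
    ← sum_neg_distrib]
  congr 1
  · apply sum_congr rfl
    intro t ht
    rw [mem_range] at ht
    rw [dd_XB hz _ _ (by omega), ← gg hz t (by omega)]
    ring
  · apply sum_congr rfl
    intro t ht
    rw [mem_range] at ht
    rw [dd_XB hz _ _ (by omega)]
    have h := gg2 hz t (by omega)
    linear_combination (6 * (M + 1) * ww z (3 * t + 3)) * h

/-- the correction term -/
noncomputable def T2 (M : ℕ) : ℚ[X] :=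
  C (1 / 3 : ℚ) * (X ^ (3 * (M + 1)) - 1) *
    (2 + (((3 * (M + 1) : ℕ) : ℚ) + 1) • X ^ (2 * (M + 1)))

lemma ev_T2 (hz : IsPrimitiveRoot z (3 * (M + 1))) : ev z (T2 M) = 0 := by
  rw [T2, map_mul, map_mul, map_sub, ev_pow, hz.pow_eq_one, map_one]
  ring

lemma dd_T2 (hz : IsPrimitiveRoot z (3 * (M + 1))) :
    dd z (T2 M) = (M + 1) * (2 + (3 * (M + 1) + 1) * (z ^ (M + 1)) ^ 2) := by
  rw [T2, mul_assoc, dd_mul, dd_mul, dd_sub, dd_pow, dd_one, map_mul, map_sub, ev_pow,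
    hz.pow_eq_one, map_one, sub_self, zero_mul, mul_zero, zero_mul, zero_add, add_zero, sub_zero,
    map_add, map_smul, ev_pow]
  have h1 : ev z (C (1 / 3 : ℚ)) = 1 / 3 := by simp
  have h2 : ev z 2 = 2 := map_ofNat _ 2
  rw [h1, h2, Algebra.smul_def]
  push_cast
  simp only [map_add, map_mul, map_natCast, map_one, map_ofNat]
  ring

end root4
end QCat

theorem qCatalan_sum_congruence (n : ℕ) (hn : 0 < n) (h3 : 3 ∣ n) :
    (Polynomial.cyclotomic n ℚ) ^ 2 ∣
      (∑ k ∈ Finset.range n, X ^ k * qCatalan k) -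
        (X ^ (n * (2 * n + 1) / 3) +
          Polynomial.C (1 / 3 : ℚ) * (X ^ n - 1) * (2 + (n + 1 : ℚ) • X ^ (2 * n / 3))) := by
  obtain ⟨N, rfl⟩ := h3
  obtain ⟨M, rfl⟩ : ∃ M, N = M + 1 := ⟨N - 1, by omega⟩
  have hz := Complex.isPrimitiveRoot_exp (3 * (M + 1)) hn.ne'
  have e1 : 3 * (M + 1) * (2 * (3 * (M + 1)) + 1) / 3 = (M + 1) * (6 * (M + 1) + 1) := by
    apply Nat.div_eq_of_eq_mul_left (by norm_num)
    ring
  have e2 : 2 * (3 * (M + 1)) / 3 = 2 * (M + 1) := by omega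
  rw [e1, e2, QCat.main_sum]
  have e3 : QCat.T0 M - QCat.T1 M + X ^ ((M + 1) * (6 * (M + 1) + 1)) -
      (X ^ ((M + 1) * (6 * (M + 1) + 1)) + C (1 / 3 : ℚ) * (X ^ (3 * (M + 1)) - 1) *
        (2 + (((3 * (M + 1) : ℕ) : ℚ) + 1) • X ^ (2 * (M + 1)))) =
      QCat.T0 M - QCat.T1 M - QCat.T2 M := by
    rw [QCat.T2]; ring
  rw [e3]
  apply QCat.cyc_sq _ hn _ hz
  · rw [map_sub, map_sub, QCat.ev_T0 hz, QCat.ev_T1 hz, QCat.ev_T2 hz]; ring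
  · rw [QCat.dd_sub, QCat.dd_sub, QCat.dd_T0 hz, QCat.dd_T1 hz, QCat.dd_T2 hz, QCat.W_eq hz]
    ring
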